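/- arXiv:1402.0686 — 2 statements merged into one kernel-verified Lean document; each statement's English description precedes it below -/
import Mathlib

section
/- Let (X, Z)ᵀ ∼ CSC₂(γ) be a bivariate canonical skew-Cauchy vector. For any a ∈ ℝ, the random variable Y_a = X + aZ has distribution SC₁(0, 1+a², γ_a) with γ_a = γ/√(1 + a²(1+γ²)), and its median equals η = γ/√(1+γ²), independently of a. -/
open MeasureTheory

/-- Distribution function of the Student `t` distribution with 3 degrees of freedom. -/
noncomputable def t3cdf (x : ℝ) : ℝ :=
  1 / 2 + (1 / Real.pi) * ((x / Real.sqrt 3) / (1 + x ^ 2 / 3) + Real.arctan (x / Real.sqrt 3))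

/-- Density of the canonical bivariate skew-Cauchy distribution `CSC₂(γ)`,
i.e. the bivariate skew-`t` with `ν = 1`, `ξ = 0`, `Ω = I₂`, skewness `γe₁`. -/
noncomputable def csc2Pdf (γ : ℝ) (x z : ℝ) : ℝ :=
  2 * ((1 / (2 * Real.pi)) * (1 + x ^ 2 + z ^ 2) ^ (-(3 : ℝ) / 2)) *
    t3cdf (γ * x * Real.sqrt (3 / (x ^ 2 + z ^ 2 + 1)))

/-- Density of the univariate skew-Cauchy distribution `SC₁(ξ, ω², γ)`
(the skew-`t` density with `ν = 1`). -/
noncomputable def scPdf (ξ ω γ y : ℝ) : ℝ :=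
  (2 / ω) * (1 / (Real.pi * (1 + ((y - ξ) / ω) ^ 2))) *
    (1 / 2 + (γ * ((y - ξ) / ω) * Real.sqrt (2 / (1 + ((y - ξ) / ω) ^ 2))) /
      (2 * Real.sqrt (2 + (γ * ((y - ξ) / ω) * Real.sqrt (2 / (1 + ((y - ξ) / ω) ^ 2))) ^ 2)))

/-! If `(X, Z, W)` is standard trivariate Cauchy, then `CSC₂(γ)` is the law of `(X, Z)` conditioned
on `W ≤ γ X`. The density of `X + a Z` at `y` is therefore twice the integral of the spherical
density over the half-plane `x = y - a z`, `w ≤ γ x`. In the coordinates `z` and `t = w - γ x` the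
constraint becomes `t ≤ 0`, free of `z`, so `z` can be integrated out first; both integrals are
elementary and give the density of `SC₁(0, 1 + a², γ_a)`. The distribution function of `SC₁` is a
difference of arctangents which cancel exactly at the median. -/

open Filter Real Set Topology

section ImproperIntegrals

lemma integrableOn_Iic_deriv_of_nonneg {F f : ℝ → ℝ} {x m : ℝ}
    (hderiv : ∀ t ∈ Iic x, HasDerivAt F (f t) t) (hf : ∀ t ∈ Iic x, 0 ≤ f t)
    (hbot : Tendsto F atBot (𝓝 m)) : IntegrableOn f (Iic x) := by
  have hrefl : IntegrableOn (fun t => f (-t)) (Ioi (-x)) := by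
    refine integrableOn_Ioi_deriv_of_nonneg' (g := fun t => -F (-t)) (fun t ht => ?_)
      (fun t ht => hf _ (neg_lt.mp (mem_Ioi.mp ht)).le) (hbot.comp tendsto_neg_atTop_atBot).neg
    have hF := hderiv (-t) (neg_le.mp (mem_Ici.mp ht))
    simpa using (hF.comp t (hasDerivAt_neg t)).fun_neg
  rw [integrableOn_Iic_iff_integrableOn_Iio]
  simpa using hrefl.comp_neg

lemma lintegral_Iic_of_hasDerivAt_of_nonneg {F f : ℝ → ℝ} {x m : ℝ}
    (hderiv : ∀ t ∈ Iic x, HasDerivAt F (f t) t) (hf : ∀ t ∈ Iic x, 0 ≤ f t)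
    (hbot : Tendsto F atBot (𝓝 m)) :
    ∫⁻ t in Iic x, ENNReal.ofReal (f t) = ENNReal.ofReal (F x - m) := by
  have hint := integrableOn_Iic_deriv_of_nonneg hderiv hf hbot
  rw [← integral_Iic_of_hasDerivAt_of_tendsto' hderiv hint hbot,
    ofReal_integral_eq_lintegral_ofReal hint (ae_restrict_of_forall_mem measurableSet_Iic hf)]

lemma lintegral_of_hasDerivAt_of_nonneg {F f : ℝ → ℝ} {m n : ℝ}
    (hderiv : ∀ t, HasDerivAt F (f t) t) (hf : ∀ t, 0 ≤ f t)
    (hbot : Tendsto F atBot (𝓝 m)) (htop : Tendsto F atTop (𝓝 n)) :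
    ∫⁻ t, ENNReal.ofReal (f t) = ENNReal.ofReal (n - m) := by
  have hint : Integrable f := by
    rw [← integrableOn_univ, ← Iic_union_Ioi (a := (0 : ℝ))]
    exact (integrableOn_Iic_deriv_of_nonneg (fun t _ => hderiv t) (fun t _ => hf t) hbot).union
      (integrableOn_Ioi_deriv_of_nonneg' (fun t _ => hderiv t) (fun t _ => hf t) htop)
  rw [← integral_of_hasDerivAt_of_tendsto hderiv hint hbot htop,
    ofReal_integral_eq_lintegral_ofReal hint (ae_of_all _ hf)]

lemma setLIntegral_Iic_eq_setLIntegral_Iic_zero (f : ℝ → ENNReal) (x : ℝ) :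
    ∫⁻ t in Iic x, f t = ∫⁻ t in Iic 0, f (t + x) := by
  rw [← (measurePreserving_add_right volume x).setLIntegral_comp_preimage_emb
    (MeasurableEquiv.addRight x).measurableEmbedding f (Iic x)]
  simp

end ImproperIntegrals

section DefiniteQuadratic

/-- The angle of the trigonometric substitution `a t + b = √(a c - b²) tan θ`, which turns powers
of the positive definite quadratic `a t² + 2 b t + c` into powers of `cos θ`. -/
noncomputable def quadAngle (a b c t : ℝ) : ℝ :=
  arctan ((a * t + b) / √(a * c - b ^ 2))

variable {a b c : ℝ}

lemma quadratic_pos (ha : 0 < a) (hdisc : 0 < a * c - b ^ 2) (t : ℝ) :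
    0 < a * t ^ 2 + 2 * b * t + c := by
  refine pos_of_mul_pos_left (b := a) ?_ ha.le
  calc 0 < (a * t + b) ^ 2 + (a * c - b ^ 2) := by positivity
    _ = (a * t ^ 2 + 2 * b * t + c) * a := by ring

lemma sqrt_one_add_div_sqrt_sq (ha : 0 < a) (hdisc : 0 < a * c - b ^ 2) (t : ℝ) :
    √(1 + ((a * t + b) / √(a * c - b ^ 2)) ^ 2) =
      √a * √(a * t ^ 2 + 2 * b * t + c) / √(a * c - b ^ 2) := by
  rw [← sqrt_mul ha.le, ← sqrt_div (mul_pos ha (quadratic_pos ha hdisc t)).le, div_pow,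
    sq_sqrt hdisc.le]
  congr 1
  field_simp
  ring

lemma sin_quadAngle (ha : 0 < a) (hdisc : 0 < a * c - b ^ 2) (t : ℝ) :
    sin (quadAngle a b c t) = (a * t + b) / (√a * √(a * t ^ 2 + 2 * b * t + c)) := by
  have := sqrt_pos.mpr hdisc
  rw [quadAngle, sin_arctan, sqrt_one_add_div_sqrt_sq ha hdisc, div_div_div_cancel_right₀ this.ne']

lemma cos_quadAngle (ha : 0 < a) (hdisc : 0 < a * c - b ^ 2) (t : ℝ) :
    cos (quadAngle a b c t) = √(a * c - b ^ 2) / (√a * √(a * t ^ 2 + 2 * b * t + c)) := by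
  rw [quadAngle, cos_arctan, sqrt_one_add_div_sqrt_sq ha hdisc, one_div_div]

lemma hasDerivAt_quadAngle (ha : 0 < a) (hdisc : 0 < a * c - b ^ 2) (t : ℝ) :
    HasDerivAt (quadAngle a b c) (√(a * c - b ^ 2) / (a * t ^ 2 + 2 * b * t + c)) t := by
  have hlin : HasDerivAt (fun t => (a * t + b) / √(a * c - b ^ 2)) (a / √(a * c - b ^ 2)) t := by
    simpa using (((hasDerivAt_id t).const_mul a).add_const b).div_const √(a * c - b ^ 2)
  refine hlin.arctan.congr_deriv ?_
  have hsq : 1 + ((a * t + b) / √(a * c - b ^ 2)) ^ 2 =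
      a * (a * t ^ 2 + 2 * b * t + c) / √(a * c - b ^ 2) ^ 2 := by
    field_simp
    rw [sq_sqrt hdisc.le]
    ring
  rw [hsq]
  field_simp

lemma tendsto_quadAngle_atBot (ha : 0 < a) (hdisc : 0 < a * c - b ^ 2) :
    Tendsto (quadAngle a b c) atBot (𝓝 (-(π / 2))) :=
  (tendsto_nhds_of_tendsto_nhdsWithin tendsto_arctan_atBot).comp
    ((tendsto_atBot_add_const_right _ b (tendsto_id.const_mul_atBot ha)).atBot_div_const
      (sqrt_pos.mpr hdisc))

lemma tendsto_quadAngle_atTop (ha : 0 < a) (hdisc : 0 < a * c - b ^ 2) :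
    Tendsto (quadAngle a b c) atTop (𝓝 (π / 2)) :=
  (tendsto_nhds_of_tendsto_nhdsWithin tendsto_arctan_atTop).comp
    ((tendsto_atTop_add_const_right _ b (tendsto_id.const_mul_atTop ha)).atTop_div_const
      (sqrt_pos.mpr hdisc))

lemma lintegral_Iic_inv_sqrt_quadratic_cube (ha : 0 < a) (hdisc : 0 < a * c - b ^ 2) (x : ℝ) :
    ∫⁻ t in Iic x, ENNReal.ofReal ((√(a * t ^ 2 + 2 * b * t + c) ^ 3)⁻¹) =
      ENNReal.ofReal ((√a + (a * x + b) / √(a * x ^ 2 + 2 * b * x + c)) / (a * c - b ^ 2)) := by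
  have hderiv (t : ℝ) : HasDerivAt (fun t => √a / (a * c - b ^ 2) * sin (quadAngle a b c t))
      ((√(a * t ^ 2 + 2 * b * t + c) ^ 3)⁻¹) t := by
    refine ((hasDerivAt_quadAngle ha hdisc t).sin.const_mul _).congr_deriv ?_
    have hq := quadratic_pos ha hdisc t
    rw [cos_quadAngle ha hdisc, pow_succ √(a * t ^ 2 + 2 * b * t + c), sq_sqrt hq.le]
    nth_rw 1 [← sq_sqrt hdisc.le]
    field_simp
  have hbot : Tendsto (fun t => √a / (a * c - b ^ 2) * sin (quadAngle a b c t)) atBot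
      (𝓝 (√a / (a * c - b ^ 2) * sin (-(π / 2)))) :=
    ((continuous_sin.tendsto _).comp (tendsto_quadAngle_atBot ha hdisc)).const_mul _
  rw [lintegral_Iic_of_hasDerivAt_of_nonneg (fun t _ => hderiv t) (fun t _ => by positivity) hbot,
    sin_quadAngle ha hdisc, sin_neg, sin_pi_div_two]
  congr 1
  field_simp
  ring

lemma hasDerivAt_quadAngle_add_sin_mul_cos (ha : 0 < a) (hdisc : 0 < a * c - b ^ 2) (t : ℝ) :
    HasDerivAt
      (fun t => a / (2 * √(a * c - b ^ 2) ^ 3) *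
        (quadAngle a b c t + sin (quadAngle a b c t) * cos (quadAngle a b c t)))
      (((a * t ^ 2 + 2 * b * t + c) ^ 2)⁻¹) t := by
  have hθ := hasDerivAt_quadAngle ha hdisc t
  refine ((hθ.add (hθ.sin.mul hθ.cos)).const_mul _).congr_deriv ?_
  have hq := quadratic_pos ha hdisc t
  have hcos : cos (quadAngle a b c t) ^ 2 =
      √(a * c - b ^ 2) ^ 2 / (a * (a * t ^ 2 + 2 * b * t + c)) := by
    rw [cos_quadAngle ha hdisc, div_pow, mul_pow, sq_sqrt ha.le, sq_sqrt hq.le]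
  calc _ = a / √(a * c - b ^ 2) ^ 3 * (cos (quadAngle a b c t) ^ 2 *
        (√(a * c - b ^ 2) / (a * t ^ 2 + 2 * b * t + c))) := by
        linear_combination -(a / (2 * √(a * c - b ^ 2) ^ 3) *
          (√(a * c - b ^ 2) / (a * t ^ 2 + 2 * b * t + c))) *
          sin_sq_add_cos_sq (quadAngle a b c t)
    _ = _ := by
        rw [hcos]
        field_simp

lemma tendsto_quadAngle_add_sin_mul_cos {l : Filter ℝ} {θ : ℝ}
    (hθ : Tendsto (quadAngle a b c) l (𝓝 θ)) :
    Tendsto (fun t => a / (2 * √(a * c - b ^ 2) ^ 3) *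
        (quadAngle a b c t + sin (quadAngle a b c t) * cos (quadAngle a b c t))) l
      (𝓝 (a / (2 * √(a * c - b ^ 2) ^ 3) * (θ + sin θ * cos θ))) :=
  (hθ.add (((continuous_sin.tendsto θ).comp hθ).mul
    ((continuous_cos.tendsto θ).comp hθ))).const_mul _

lemma lintegral_Iic_inv_quadratic_sq (ha : 0 < a) (hdisc : 0 < a * c - b ^ 2) (x : ℝ) :
    ∫⁻ t in Iic x, ENNReal.ofReal (((a * t ^ 2 + 2 * b * t + c) ^ 2)⁻¹) =
      ENNReal.ofReal (a / (2 * √(a * c - b ^ 2) ^ 3) *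
        (quadAngle a b c x + sin (quadAngle a b c x) * cos (quadAngle a b c x) + π / 2)) := by
  rw [lintegral_Iic_of_hasDerivAt_of_nonneg
    (fun t _ => hasDerivAt_quadAngle_add_sin_mul_cos ha hdisc t) (fun t _ => by positivity)
    (tendsto_quadAngle_add_sin_mul_cos (tendsto_quadAngle_atBot ha hdisc)),
    cos_neg, cos_pi_div_two]
  congr 1
  ring

lemma lintegral_inv_quadratic_sq (ha : 0 < a) (hdisc : 0 < a * c - b ^ 2) :
    ∫⁻ t, ENNReal.ofReal (((a * t ^ 2 + 2 * b * t + c) ^ 2)⁻¹) =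
      ENNReal.ofReal (π * a / (2 * √(a * c - b ^ 2) ^ 3)) := by
  rw [lintegral_of_hasDerivAt_of_nonneg (hasDerivAt_quadAngle_add_sin_mul_cos ha hdisc)
    (fun t => by positivity)
    (tendsto_quadAngle_add_sin_mul_cos (tendsto_quadAngle_atBot ha hdisc))
    (tendsto_quadAngle_add_sin_mul_cos (tendsto_quadAngle_atTop ha hdisc)),
    cos_neg, cos_pi_div_two]
  congr 1
  ring

end DefiniteQuadratic

section HiddenTruncation

/-- Density of the standard trivariate Cauchy distribution, from which `CSC₂(γ)` arises by
conditioning on a half-space and discarding the third coordinate. -/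
noncomputable def cauchy3Pdf (x z w : ℝ) : ℝ :=
  (π ^ 2)⁻¹ * ((1 + x ^ 2 + z ^ 2 + w ^ 2) ^ 2)⁻¹

lemma measurable_cauchy3Pdf_uncurry :
    Measurable fun p : ℝ × ℝ × ℝ => cauchy3Pdf p.1 p.2.1 p.2.2 := by
  unfold cauchy3Pdf
  fun_prop

lemma measurable_csc2Pdf_uncurry (γ : ℝ) : Measurable fun p : ℝ × ℝ => csc2Pdf γ p.1 p.2 := by
  unfold csc2Pdf t3cdf
  fun_prop

lemma t3cdf_mul_sqrt_three (s : ℝ) :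
    t3cdf (s * √3) = 1 / 2 + 1 / π * (s / (1 + s ^ 2) + arctan s) := by
  rw [t3cdf, mul_pow, sq_sqrt (by positivity), mul_div_cancel_right₀ _ three_ne_zero,
    mul_div_cancel_right₀ _ (by positivity)]

lemma csc2Pdf_eq (γ x z : ℝ) :
    csc2Pdf γ x z = (π * √(1 + x ^ 2 + z ^ 2) ^ 3)⁻¹ *
      t3cdf (γ * x / √(1 + x ^ 2 + z ^ 2) * √3) := by
  have hR : 0 < 1 + x ^ 2 + z ^ 2 := by positivity
  have hpow : (1 + x ^ 2 + z ^ 2) ^ (-(3 : ℝ) / 2) = (√(1 + x ^ 2 + z ^ 2) ^ 3)⁻¹ := by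
    rw [sqrt_eq_rpow, ← rpow_mul_natCast hR.le, ← rpow_neg hR.le]
    norm_num
  have harg : γ * x * √(3 / (x ^ 2 + z ^ 2 + 1)) = γ * x / √(1 + x ^ 2 + z ^ 2) * √3 := by
    rw [sqrt_div (by positivity), add_comm _ 1, ← add_assoc]
    ring
  rw [csc2Pdf, hpow, harg]
  field_simp

lemma sin_arctan_mul_cos_arctan (s : ℝ) : sin (arctan s) * cos (arctan s) = s / (1 + s ^ 2) := by
  rw [sin_arctan, cos_arctan, div_mul_div_comm, mul_one, mul_self_sqrt (by positivity)]

lemma ofReal_csc2Pdf_eq_lintegral_cauchy3Pdf (γ x z : ℝ) :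
    ENNReal.ofReal (csc2Pdf γ x z) =
      2 * ∫⁻ w in Iic (γ * x), ENNReal.ofReal (cauchy3Pdf x z w) := by
  set R := 1 + x ^ 2 + z ^ 2 with hR
  have hdisc : 0 < 1 * R - 0 ^ 2 := by
    rw [hR, one_mul, zero_pow two_ne_zero, sub_zero]
    positivity
  have hpdf (w : ℝ) : ENNReal.ofReal (cauchy3Pdf x z w) = ENNReal.ofReal (π ^ 2)⁻¹ *
      ENNReal.ofReal (((1 * w ^ 2 + 2 * 0 * w + R) ^ 2)⁻¹) := by
    rw [← ENNReal.ofReal_mul (by positivity), cauchy3Pdf, hR]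
    ring_nf
  have hangle : quadAngle 1 0 R (γ * x) = arctan (γ * x / √R) := by simp [quadAngle]
  simp_rw [hpdf]
  rw [lintegral_const_mul' _ _ ENNReal.ofReal_ne_top,
    lintegral_Iic_inv_quadratic_sq one_pos hdisc, ← ENNReal.ofReal_mul (by positivity),
    ← ENNReal.ofReal_ofNat 2, ← ENNReal.ofReal_mul zero_le_two, csc2Pdf_eq, ← hR,
    t3cdf_mul_sqrt_three, hangle, sin_arctan_mul_cos_arctan, one_mul, zero_pow two_ne_zero,
    sub_zero]
  congr 1
  field_simp
  ring

lemma lintegral_cauchy3Pdf_line (γ a y t : ℝ) :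
    ∫⁻ z, ENNReal.ofReal (cauchy3Pdf (y - a * z) z (t + γ * (y - a * z))) =
      ENNReal.ofReal ((1 + a ^ 2 * (1 + γ ^ 2)) / (2 * π)) *
        ENNReal.ofReal ((√((1 + a ^ 2) * t ^ 2 + 2 * (γ * y) * t +
          (1 + a ^ 2 * (1 + γ ^ 2) + (1 + γ ^ 2) * y ^ 2)) ^ 3)⁻¹) := by
  set A := 1 + a ^ 2 * (1 + γ ^ 2) with hA
  set B := -(a * ((1 + γ ^ 2) * y + γ * t)) with hB
  set C := 1 + (1 + γ ^ 2) * y ^ 2 + 2 * γ * y * t + t ^ 2 with hC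
  have hApos : 0 < A := by positivity
  have hdisc_eq : A * C - B ^ 2 =
      (1 + a ^ 2) * t ^ 2 + 2 * (γ * y) * t + (A + (1 + γ ^ 2) * y ^ 2) := by
    rw [hA, hB, hC]
    ring
  have hdisc : 0 < A * C - B ^ 2 := by
    have : A * C - B ^ 2 = (t + γ * y) ^ 2 + (a * t) ^ 2 + A + y ^ 2 := by
      rw [hA, hB, hC]
      ring
    rw [this]
    positivity
  have hpdf (z : ℝ) : ENNReal.ofReal (cauchy3Pdf (y - a * z) z (t + γ * (y - a * z))) =
      ENNReal.ofReal (π ^ 2)⁻¹ * ENNReal.ofReal (((A * z ^ 2 + 2 * B * z + C) ^ 2)⁻¹) := by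
    rw [← ENNReal.ofReal_mul (by positivity), cauchy3Pdf, hA, hB, hC]
    ring_nf
  simp_rw [hpdf]
  rw [lintegral_const_mul' _ _ ENNReal.ofReal_ne_top, lintegral_inv_quadratic_sq hApos hdisc,
    ← hdisc_eq, ← ENNReal.ofReal_mul (by positivity), ← ENNReal.ofReal_mul (by positivity)]
  congr 1
  field_simp

end HiddenTruncation

section SkewCauchy

lemma scPdf_eq (ξ ω γ y : ℝ) :
    scPdf ξ ω γ y = (π * ω * (1 + ((y - ξ) / ω) ^ 2))⁻¹ *
      (1 + γ * ((y - ξ) / ω) / √(1 + (1 + γ ^ 2) * ((y - ξ) / ω) ^ 2)) := by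
  rw [scPdf]
  generalize (y - ξ) / ω = u
  set E := √(1 + (1 + γ ^ 2) * u ^ 2)
  have hE : 0 < E := sqrt_pos.mpr (by positivity)
  have hskew : √(2 + (γ * u * √(2 / (1 + u ^ 2))) ^ 2) = √2 * E / √(1 + u ^ 2) := by
    rw [← sqrt_mul zero_le_two, ← sqrt_div (by positivity), mul_pow, sq_sqrt (by positivity)]
    congr 1
    field_simp
    ring
  rw [hskew, sqrt_div zero_le_two]
  field_simp

lemma scPdf_nonneg {ω : ℝ} (hω : 0 ≤ ω) (ξ γ y : ℝ) : 0 ≤ scPdf ξ ω γ y := by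
  rw [scPdf_eq]
  generalize (y - ξ) / ω = u
  have hE : 0 < √(1 + (1 + γ ^ 2) * u ^ 2) := sqrt_pos.mpr (by positivity)
  have hskew : |γ * u / √(1 + (1 + γ ^ 2) * u ^ 2)| ≤ 1 := by
    rw [abs_div, abs_of_pos hE, div_le_one hE]
    exact abs_le_sqrt (by nlinarith [sq_nonneg u])
  have := (abs_le.mp hskew).1
  exact mul_nonneg (by positivity) (by linarith)

/-- Distribution function of the univariate skew-Cauchy distribution `SC₁(ξ, ω², γ)`. -/
noncomputable def scCdf (ξ ω γ y : ℝ) : ℝ :=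
  1 / 2 + π⁻¹ * (arctan ((y - ξ) / ω) - arctan (γ / √(1 + (1 + γ ^ 2) * ((y - ξ) / ω) ^ 2)))

lemma hasDerivAt_arctan_div_sqrt (γ u : ℝ) :
    HasDerivAt (fun u => arctan (γ / √(1 + (1 + γ ^ 2) * u ^ 2)))
      (-(γ * u / ((1 + u ^ 2) * √(1 + (1 + γ ^ 2) * u ^ 2)))) u := by
  have hrad : 0 < 1 + (1 + γ ^ 2) * u ^ 2 := by positivity
  have hE : 0 < √(1 + (1 + γ ^ 2) * u ^ 2) := sqrt_pos.mpr hrad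
  have hpoly : HasDerivAt (fun u => 1 + (1 + γ ^ 2) * u ^ 2) ((1 + γ ^ 2) * (2 * u)) u := by
    simpa using (((hasDerivAt_id u).pow 2).const_mul (1 + γ ^ 2)).const_add 1
  refine ((hasDerivAt_const u γ).fun_div (hpoly.sqrt hrad.ne') hE.ne').arctan.congr_deriv ?_
  have hsq : 1 + (γ / √(1 + (1 + γ ^ 2) * u ^ 2)) ^ 2 =
      (1 + γ ^ 2) * (1 + u ^ 2) / √(1 + (1 + γ ^ 2) * u ^ 2) ^ 2 := by
    field_simp
    rw [sq_sqrt hrad.le]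
    ring
  rw [hsq]
  field_simp
  ring

lemma hasDerivAt_scCdf (ξ ω γ y : ℝ) : HasDerivAt (scCdf ξ ω γ) (scPdf ξ ω γ y) y := by
  have hstd : HasDerivAt (fun y => (y - ξ) / ω) (1 / ω) y :=
    ((hasDerivAt_id y).sub_const ξ).div_const ω
  have hskew := (hasDerivAt_arctan_div_sqrt γ ((y - ξ) / ω)).comp y hstd
  refine (((hstd.arctan.sub hskew).const_mul π⁻¹).const_add (1 / 2)).congr_deriv ?_
  rw [scPdf_eq]
  generalize (y - ξ) / ω = u
  rw [mul_right_comm, mul_inv, inv_eq_one_div ω]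
  field_simp
  ring

lemma tendsto_scCdf_atBot {ω : ℝ} (hω : 0 < ω) (ξ γ : ℝ) :
    Tendsto (scCdf ξ ω γ) atBot (𝓝 0) := by
  have hstd : Tendsto (fun y => (y - ξ) / ω) atBot atBot :=
    (tendsto_atBot_add_const_right _ (-ξ) tendsto_id).atBot_div_const hω
  have hsq : Tendsto (fun u : ℝ => u ^ 2) atBot atTop := by
    simpa [Function.comp_def] using
      (tendsto_pow_atTop (α := ℝ) two_ne_zero).comp tendsto_abs_atBot_atTop
  have hsqrt : Tendsto (fun u : ℝ => √(1 + (1 + γ ^ 2) * u ^ 2)) atBot atTop :=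
    tendsto_sqrt_atTop.comp
      (tendsto_atTop_add_const_left _ _ (hsq.const_mul_atTop (by positivity)))
  have hskew := (continuous_arctan.tendsto 0).comp ((hsqrt.const_div_atTop γ).comp hstd)
  have harctan := (tendsto_nhds_of_tendsto_nhdsWithin tendsto_arctan_atBot).comp hstd
  have hlim : 1 / 2 + π⁻¹ * (-(π / 2) - arctan 0) = 0 := by
    rw [arctan_zero]
    field_simp
    ring
  exact hlim ▸ ((harctan.sub hskew).const_mul π⁻¹).const_add (1 / 2)

lemma scCdf_median {ω : ℝ} (hω : ω ≠ 0) (ξ γ : ℝ) :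
    scCdf ξ ω γ (ξ + ω * (γ / √(1 + γ ^ 2))) = 1 / 2 := by
  have hstd : (ξ + ω * (γ / √(1 + γ ^ 2)) - ξ) / ω = γ / √(1 + γ ^ 2) := by
    field_simp
    ring
  have hrad : 1 + (1 + γ ^ 2) * (γ / √(1 + γ ^ 2)) ^ 2 = 1 + γ ^ 2 := by
    rw [div_pow, sq_sqrt (by positivity)]
    field_simp
  rw [scCdf, hstd, hrad, sub_self, mul_zero, add_zero]

lemma withDensity_scPdf_Iic {ω : ℝ} (hω : 0 < ω) (ξ γ y : ℝ) :
    (volume.withDensity fun y => ENNReal.ofReal (scPdf ξ ω γ y)) (Iic y) =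
      ENNReal.ofReal (scCdf ξ ω γ y) := by
  rw [withDensity_apply _ measurableSet_Iic,
    lintegral_Iic_of_hasDerivAt_of_nonneg (fun t _ => hasDerivAt_scCdf ξ ω γ t)
      (fun t _ => scPdf_nonneg hω.le ξ γ t) (tendsto_scCdf_atBot hω ξ γ), sub_zero]

end SkewCauchy

section LinearForm

lemma map_add_comp_snd_withDensity {G β : Type*} [AddGroup G] [MeasurableSpace G]
    [MeasurableAdd₂ G] [MeasurableNeg G] [MeasurableSpace β] {μ : Measure G} {ν : Measure β}
    [SFinite μ] [SFinite ν] [μ.IsAddRightInvariant] {f : G × β → ENNReal} (hf : Measurable f)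
    {g : β → G} (hg : Measurable g) :
    ((μ.prod ν).withDensity f).map (fun p => p.1 + g p.2) =
      μ.withDensity fun y => ∫⁻ z, f (y - g z, z) ∂ν := by
  have hshear : Measurable fun p : G × β => f (p.1 - g p.2, p.2) := by fun_prop
  refine Measure.ext_of_lintegral _ fun h hh => ?_
  have hsum : Measurable fun p : G × β => h (p.1 + g p.2) := by fun_prop
  calc ∫⁻ y, h y ∂((μ.prod ν).withDensity f).map (fun p => p.1 + g p.2)
      = ∫⁻ p, f p * h (p.1 + g p.2) ∂μ.prod ν := by
        rw [lintegral_map hh (by fun_prop), lintegral_withDensity_eq_lintegral_mul _ hf hsum]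
        rfl
    _ = ∫⁻ z, ∫⁻ x, f (x, z) * h (x + g z) ∂μ ∂ν := lintegral_prod_symm' _ (hf.mul hsum)
    _ = ∫⁻ z, ∫⁻ y, f (y - g z, z) * h y ∂μ ∂ν := by
        refine lintegral_congr fun z => ?_
        rw [← lintegral_sub_right_eq_self _ (g z)]
        simp only [sub_add_cancel]
    _ = ∫⁻ y, ∫⁻ z, f (y - g z, z) * h y ∂ν ∂μ :=
        (lintegral_lintegral_swap (hshear.mul (hh.comp measurable_fst)).aemeasurable).symm
    _ = ∫⁻ y, (∫⁻ z, f (y - g z, z) ∂ν) * h y ∂μ := by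
        refine lintegral_congr fun y => lintegral_mul_const _ ?_
        exact hshear.comp measurable_prodMk_left
    _ = ∫⁻ y, h y ∂μ.withDensity fun y => ∫⁻ z, f (y - g z, z) ∂ν :=
        (lintegral_withDensity_eq_lintegral_mul _ hshear.lintegral_prod_right' hh).symm

lemma scPdf_zero_linear_form_eq (γ a y : ℝ) :
    scPdf 0 √(1 + a ^ 2) (γ / √(1 + a ^ 2 * (1 + γ ^ 2))) y =
      (π * (1 + a ^ 2 + y ^ 2))⁻¹ *
        (√(1 + a ^ 2) + γ * y / √(1 + a ^ 2 * (1 + γ ^ 2) + (1 + γ ^ 2) * y ^ 2)) := by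
  have hω_sq : √(1 + a ^ 2) ^ 2 = 1 + a ^ 2 := sq_sqrt (by positivity)
  have hstd : 1 + (y / √(1 + a ^ 2)) ^ 2 = (1 + a ^ 2 + y ^ 2) / √(1 + a ^ 2) ^ 2 := by
    field_simp
    rw [hω_sq]
  generalize hA : 1 + a ^ 2 * (1 + γ ^ 2) = A
  have hA_pos : 0 < A := hA ▸ by positivity
  have hrad : 1 + (1 + (γ / √A) ^ 2) * (y / √(1 + a ^ 2)) ^ 2 =
      (A + (1 + γ ^ 2) * y ^ 2) / A := by
    rw [div_pow, div_pow, hω_sq, sq_sqrt hA_pos.le]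
    field_simp
    rw [← hA]
    ring
  rw [scPdf_eq, sub_zero, hrad, hstd, sqrt_div (by positivity)]
  field_simp

lemma lintegral_csc2Pdf_line (γ a y : ℝ) :
    ∫⁻ z, ENNReal.ofReal (csc2Pdf γ (y - a * z) z) =
      ENNReal.ofReal (scPdf 0 √(1 + a ^ 2) (γ / √(1 + a ^ 2 * (1 + γ ^ 2))) y) := by
  set A := 1 + a ^ 2 * (1 + γ ^ 2) with hA
  set C := A + (1 + γ ^ 2) * y ^ 2 with hC
  have hA_pos : 0 < A := by positivity
  have hdisc_eq : (1 + a ^ 2) * C - (γ * y) ^ 2 = A * (1 + a ^ 2 + y ^ 2) := by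
    rw [hC, hA]
    ring
  have hdisc : 0 < (1 + a ^ 2) * C - (γ * y) ^ 2 := by
    rw [hdisc_eq]
    positivity
  have hmeas : Measurable fun p : ℝ × ℝ =>
      ENNReal.ofReal (cauchy3Pdf (y - a * p.1) p.1 (p.2 + γ * (y - a * p.1))) :=
    (measurable_cauchy3Pdf_uncurry.comp (g := fun p : ℝ × ℝ × ℝ => cauchy3Pdf p.1 p.2.1 p.2.2)
      (f := fun p : ℝ × ℝ => (y - a * p.1, p.1, p.2 + γ * (y - a * p.1)))
      (by fun_prop)).ennreal_ofReal
  calc ∫⁻ z, ENNReal.ofReal (csc2Pdf γ (y - a * z) z)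
      = 2 * ∫⁻ z, ∫⁻ t in Iic 0,
          ENNReal.ofReal (cauchy3Pdf (y - a * z) z (t + γ * (y - a * z))) := by
        simp_rw [ofReal_csc2Pdf_eq_lintegral_cauchy3Pdf,
          setLIntegral_Iic_eq_setLIntegral_Iic_zero _ (γ * _)]
        exact lintegral_const_mul' _ _ ENNReal.ofNat_ne_top
    _ = 2 * ∫⁻ t in Iic 0, ∫⁻ z,
          ENNReal.ofReal (cauchy3Pdf (y - a * z) z (t + γ * (y - a * z))) := by
        rw [lintegral_lintegral_swap hmeas.aemeasurable]
    _ = 2 * (ENNReal.ofReal (A / (2 * π)) * ENNReal.ofReal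
          ((√(1 + a ^ 2) + γ * y / √C) / ((1 + a ^ 2) * C - (γ * y) ^ 2))) := by
        simp_rw [lintegral_cauchy3Pdf_line]
        rw [lintegral_const_mul' _ _ ENNReal.ofReal_ne_top,
          lintegral_Iic_inv_sqrt_quadratic_cube (by positivity) hdisc]
        simp only [ne_eq, OfNat.ofNat_ne_zero, not_false_eq_true, zero_pow, mul_zero, zero_add,
          hC, hA]
    _ = ENNReal.ofReal (scPdf 0 √(1 + a ^ 2) (γ / √A) y) := by
        rw [← ENNReal.ofReal_mul (by positivity), ← ENNReal.ofReal_ofNat 2,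
          ← ENNReal.ofReal_mul zero_le_two, hdisc_eq, scPdf_zero_linear_form_eq, ← hA, ← hC]
        congr 1
        field_simp

lemma map_linear_form_csc2 (γ a : ℝ) :
    ((volume : Measure (ℝ × ℝ)).withDensity fun p => ENNReal.ofReal (csc2Pdf γ p.1 p.2)).map
        (fun p => p.1 + a * p.2) =
      volume.withDensity fun y =>
        ENNReal.ofReal (scPdf 0 √(1 + a ^ 2) (γ / √(1 + a ^ 2 * (1 + γ ^ 2))) y) := by
  simp_rw [← lintegral_csc2Pdf_line]
  exact map_add_comp_snd_withDensity (measurable_csc2Pdf_uncurry γ).ennreal_ofReal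
    (measurable_const_mul a)

lemma sqrt_mul_linear_form_median (γ a : ℝ) :
    √(1 + a ^ 2) * (γ / √(1 + a ^ 2 * (1 + γ ^ 2)) /
      √(1 + (γ / √(1 + a ^ 2 * (1 + γ ^ 2))) ^ 2)) = γ / √(1 + γ ^ 2) := by
  have hsqrt : √(1 + (γ / √(1 + a ^ 2 * (1 + γ ^ 2))) ^ 2) =
      √(1 + a ^ 2) * √(1 + γ ^ 2) / √(1 + a ^ 2 * (1 + γ ^ 2)) := by
    rw [← sqrt_mul (by positivity), ← sqrt_div (by positivity), div_pow, sq_sqrt (by positivity)]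
    congr 1
    field_simp
    ring
  rw [hsqrt]
  field_simp

end LinearForm

/-- If `(X, Z) ∼ CSC₂(γ)`, then for any `a ∈ ℝ` the variable `Y_a = X + aZ` has
distribution `SC₁(0, 1 + a², γ_a)` with `γ_a = γ/√(1 + a²(1+γ²))`, and its median is
`η = γ/√(1+γ²)`, independently of `a`. -/
theorem csc2_linear_form_and_median {Ω : Type*} [MeasureSpace Ω]
    [IsProbabilityMeasure (volume : Measure Ω)]
    (γ : ℝ) (X Z : Ω → ℝ) (hX : Measurable X) (hZ : Measurable Z)
    (hlaw : Measure.map (fun ω => (X ω, Z ω)) volume =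
      (volume : Measure (ℝ × ℝ)).withDensity fun p => ENNReal.ofReal (csc2Pdf γ p.1 p.2)) :
    ∀ a : ℝ,
      Measure.map (fun ω => X ω + a * Z ω) volume =
        (volume : Measure ℝ).withDensity (fun y =>
          ENNReal.ofReal (scPdf 0 (Real.sqrt (1 + a ^ 2))
            (γ / Real.sqrt (1 + a ^ 2 * (1 + γ ^ 2))) y)) ∧
      (volume {ω | X ω + a * Z ω ≤ γ / Real.sqrt (1 + γ ^ 2)}).toReal = 1 / 2 := by
  intro a
  have hlin : Measurable fun p : ℝ × ℝ => p.1 + a * p.2 := by fun_prop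
  have hdist : Measure.map (fun ω => X ω + a * Z ω) volume =
      volume.withDensity fun y =>
        ENNReal.ofReal (scPdf 0 √(1 + a ^ 2) (γ / √(1 + a ^ 2 * (1 + γ ^ 2))) y) := by
    rw [← map_linear_form_csc2, ← hlaw, Measure.map_map hlin (hX.prodMk hZ)]
    rfl
  refine ⟨hdist, ?_⟩
  have hmeas : Measurable fun ω => X ω + a * Z ω := hX.add (hZ.const_mul a)
  have hcdf : volume {ω | X ω + a * Z ω ≤ γ / √(1 + γ ^ 2)} =
      Measure.map (fun ω => X ω + a * Z ω) volume (Iic (γ / √(1 + γ ^ 2))) :=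
    (Measure.map_apply hmeas measurableSet_Iic).symm
  have hω : 0 < √(1 + a ^ 2) := sqrt_pos.mpr (by positivity)
  rw [hcdf, hdist, withDensity_scPdf_Iic hω, ← sqrt_mul_linear_form_median γ a,
    ← zero_add (√(1 + a ^ 2) * _), scCdf_median hω.ne', ENNReal.toReal_ofReal (by positivity)]
end

section
/- If X ∼ CSC_d(γ) is a canonical skew-Cauchy vector such that for every unit vector u ∈ ℝ^d, P(uᵀX ≤ u₁·η) = 1/2 where η = γ/√(1+γ²), then X is angularly symmetric about the point (η, 0, …, 0), and HD_X((η,0,…,0)) = 1/2. -/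
open MeasureTheory

/-- Half-space depth. -/
noncomputable def HD {d : ℕ} (μ : Measure (Fin d → ℝ)) (x : Fin d → ℝ) : ℝ :=
  ⨅ u : {u : Fin d → ℝ // ∑ i, (u i) ^ 2 = 1},
    (μ {y | ∑ i, u.1 i * y i ≤ ∑ i, u.1 i * x i}).toReal

/-- Euclidean-normalized direction of a vector in `ℝ^d`. -/
noncomputable def dir {d : ℕ} (v : Fin d → ℝ) : Fin d → ℝ :=
  (Real.sqrt (∑ i, (v i) ^ 2))⁻¹ • v

/-!
Write `ŷ = y / ‖y‖`, centre the law at the origin, and let `g` be a standard Gaussian vector.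
Opposite half-spaces have equal mass, so `E[⟪g, w⟫ μ{y | ⟪g - v, y⟫ ≤ 0}]` does not change when
`y` is replaced by `-y`. On the other hand, by Fubini's theorem and the mean of a Gaussian truncated
to a half-space, it equals `-(2π)^(-1/2) ∫ ⟪ŷ, w⟫ exp (-⟪v, ŷ⟫² / 2) ∂μ`, which changes sign; hence
this integral vanishes. Taking `v = √(2n) w`, the projection `T = ⟪ŷ, w⟫` satisfies
`∫ T exp (-T²)ⁿ ∂μ = 0` for all `n`, and Weierstrass approximation in the variable `exp (-T²)` gives
`∫ sin T ∂μ = 0`: the characteristic function of `ŷ` is real, so its law is symmetric.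
-/

open ProbabilityTheory Set Filter
open scoped RealInnerProductSpace NNReal Topology

lemma integral_mul_comp_eq_zero_of_forall_pow {Ω : Type*} {mΩ : MeasurableSpace Ω} {P : Measure Ω}
    {a b : Ω → ℝ} {c d : ℝ} (ha : Integrable a P) (hb : AEStronglyMeasurable b P)
    (hmem : ∀ᵐ ω ∂P, b ω ∈ Icc c d) (hpow : ∀ n : ℕ, ∫ ω, a ω * b ω ^ n ∂P = 0)
    {f : ℝ → ℝ} (hf : ContinuousOn f (Icc c d)) :
    ∫ ω, a ω * f (b ω) ∂P = 0 := by
  by_cases hint : Integrable (fun ω ↦ a ω * f (b ω)) P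
  swap
  · exact integral_undef hint
  have hb_bound : ∀ᵐ ω ∂P, ‖b ω‖ ≤ max |c| |d| := by
    filter_upwards [hmem] with ω hω using abs_le_max_abs_abs hω.1 hω.2
  have hint_pow (n : ℕ) : Integrable (fun ω ↦ a ω * b ω ^ n) P := by
    refine ha.mul_bdd (hb.pow n) (c := max |c| |d| ^ n) ?_
    filter_upwards [hb_bound] with ω hω
    simpa only [Pi.pow_apply, norm_pow] using pow_le_pow_left₀ (norm_nonneg _) hω n
  have hpoly (p : Polynomial ℝ) :
      Integrable (fun ω ↦ a ω * p.eval (b ω)) P ∧ ∫ ω, a ω * p.eval (b ω) ∂P = 0 := by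
    simp only [Polynomial.eval_eq_sum_range, Finset.mul_sum, mul_left_comm (a _)]
    refine ⟨integrable_finsetSum _ fun n _ ↦ (hint_pow n).const_mul _, ?_⟩
    rw [integral_finsetSum _ fun n _ ↦ (hint_pow n).const_mul _]
    simp only [integral_const_mul, hpow, mul_zero, Finset.sum_const_zero]
  have hbound (ε : ℝ) (hε : 0 < ε) : |∫ ω, a ω * f (b ω) ∂P| ≤ ε * ∫ ω, |a ω| ∂P := by
    obtain ⟨p, hp⟩ := exists_polynomial_near_of_continuousOn c d f hf ε hε
    calc |∫ ω, a ω * f (b ω) ∂P|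
        = |∫ ω, (a ω * p.eval (b ω) - a ω * f (b ω)) ∂P| := by
          rw [integral_sub (hpoly p).1 hint, (hpoly p).2, zero_sub, abs_neg]
      _ ≤ ∫ ω, ε * |a ω| ∂P := by
          rw [← Real.norm_eq_abs]
          refine norm_integral_le_of_norm_le (ha.abs.const_mul ε) ?_
          filter_upwards [hmem] with ω hω
          rw [← mul_sub, norm_mul, mul_comm]
          exact mul_le_mul_of_nonneg_right (hp _ hω).le (norm_nonneg _)
      _ = ε * ∫ ω, |a ω| ∂P := integral_const_mul ε _
  have hlim : Tendsto (fun ε : ℝ ↦ ε * ∫ ω, |a ω| ∂P) (𝓝[>] 0) (𝓝 0) :=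
    ((continuous_mul_const _).tendsto' 0 0 (zero_mul _)).mono_left nhdsWithin_le_nhds
  exact abs_nonpos_iff.1 (ge_of_tendsto hlim (eventually_mem_nhdsWithin.mono hbound))

lemma integral_sin_eq_zero_of_forall_integral_mul_exp {Ω : Type*} {mΩ : MeasurableSpace Ω}
    {P : Measure Ω} [IsFiniteMeasure P] {T : Ω → ℝ} {C : ℝ} (hT : AEStronglyMeasurable T P)
    (hbound : ∀ᵐ ω ∂P, |T ω| ≤ C) (h : ∀ n : ℕ, ∫ ω, T ω * Real.exp (-T ω ^ 2) ^ n ∂P = 0) :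
    ∫ ω, Real.sin (T ω) ∂P = 0 := by
  let f (x : ℝ) : ℝ := Real.sinc √(-Real.log x)
  have hf : ContinuousOn f (Icc (Real.exp (-C ^ 2)) 1) := by
    refine Real.continuous_sinc.comp_continuousOn (ContinuousOn.sqrt (ContinuousOn.neg ?_))
    exact Real.continuousOn_log.mono fun x hx ↦ ((Real.exp_pos _).trans_le hx.1).ne'
  have hmem : ∀ᵐ ω ∂P, Real.exp (-T ω ^ 2) ∈ Icc (Real.exp (-C ^ 2)) 1 := by
    filter_upwards [hbound] with ω hω
    refine ⟨Real.exp_le_exp.2 (neg_le_neg (sq_le_sq.2 (hω.trans (le_abs_self C)))), ?_⟩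
    exact Real.exp_le_one_iff.2 (neg_nonpos.2 (sq_nonneg _))
  have hsin (x : ℝ) : x * f (Real.exp (-x ^ 2)) = Real.sin x := by
    simp only [f, Real.log_exp, neg_neg, Real.sqrt_sq_eq_abs]
    rcases eq_or_ne x 0 with rfl | hx
    · simp
    · have hsinc : Real.sinc |x| = Real.sinc x := by
        rcases abs_choice x with h | h <;> simp only [h, Real.sinc_neg]
      rw [hsinc, Real.sinc_of_ne_zero hx, mul_div_cancel₀ _ hx]
  simpa only [hsin] using integral_mul_comp_eq_zero_of_forall_pow (.of_bound hT C hbound)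
    (by fun_prop) hmem h hf

lemma hasDerivAt_gaussianPDFReal (m : ℝ) (v : ℝ≥0) (x : ℝ) :
    HasDerivAt (gaussianPDFReal m v) (-(x - m) / v * gaussianPDFReal m v x) x := by
  have hexp : HasDerivAt (fun y ↦ -(y - m) ^ 2 / (2 * v)) (-(x - m) / v) x := by
    refine (((((hasDerivAt_id x).sub_const m).pow 2).neg).div_const (2 * v : ℝ)).congr_deriv ?_
    simp only [id, Nat.cast_ofNat]
    field_simp
    ring
  refine (hexp.exp.const_mul (√(2 * Real.pi * v))⁻¹).congr_deriv ?_
  rw [gaussianPDFReal]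
  ring

lemma gaussianPDFReal_zero_neg (v : ℝ≥0) (x : ℝ) :
    gaussianPDFReal 0 v (-x) = gaussianPDFReal 0 v x := by
  simp only [gaussianPDFReal, sub_zero, neg_sq]

lemma integrable_gaussianPDFReal_mul_sub (m : ℝ) (v : ℝ≥0) :
    Integrable (fun x ↦ gaussianPDFReal m v x * (x - m)) := by
  rcases eq_or_ne v 0 with rfl | hv
  · simp
  have hint : Integrable (fun x ↦ x - m) (gaussianReal m v) :=
    IsGaussian.integrable_id.sub (integrable_const m)
  rw [gaussianReal_of_var_ne_zero m hv, integrable_withDensity_iff_integrable_smul'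
    (measurable_gaussianPDF m v) (ae_of_all _ fun _ ↦ gaussianPDF_lt_top)] at hint
  simpa only [toReal_gaussianPDF, smul_eq_mul] using hint

lemma setIntegral_gaussianReal_eq_setIntegral_smul {F : Type*} [NormedAddCommGroup F]
    [NormedSpace ℝ F] (m : ℝ) {v : ℝ≥0} (hv : v ≠ 0) {s : Set ℝ} (hs : MeasurableSet s)
    (f : ℝ → F) :
    ∫ x in s, f x ∂gaussianReal m v = ∫ x in s, gaussianPDFReal m v x • f x := by
  simp only [← integral_indicator hs, integral_gaussianReal_eq_integral_smul hv,
    indicator_smul_apply]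

lemma setIntegral_Iic_sub_gaussianReal (m : ℝ) (v : ℝ≥0) (a : ℝ) :
    ∫ x in Iic a, (x - m) ∂gaussianReal m v = -(v * gaussianPDFReal m v a) := by
  rcases eq_or_ne v 0 with rfl | hv
  · rw [gaussianReal_zero_var, restrict_dirac]
    split_ifs <;> simp
  have hderiv (x : ℝ) : HasDerivAt (fun x ↦ -(v * gaussianPDFReal m v x))
      (gaussianPDFReal m v x * (x - m)) x := by
    refine ((hasDerivAt_gaussianPDFReal m v x).const_mul (v : ℝ)).neg.congr_deriv ?_
    field_simp
  have hint := (integrable_gaussianPDFReal_mul_sub m v).integrableOn (s := Iic a)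
  rw [setIntegral_gaussianReal_eq_setIntegral_smul m hv measurableSet_Iic]
  rw [← sub_zero (-(v * gaussianPDFReal m v a))]
  refine integral_Iic_of_hasDerivAt_of_tendsto' (fun x _ ↦ hderiv x) hint ?_
  exact tendsto_zero_of_hasDerivAt_of_integrableOn_Iic (fun x _ ↦ hderiv x) hint
    ((integrable_gaussianPDFReal m v).const_mul _).neg.integrableOn

section Normalize

variable {E : Type*} [NormedAddCommGroup E] [NormedSpace ℝ E]

lemma norm_normalize_le_one (y : E) : ‖NormedSpace.normalize y‖ ≤ 1 := by
  rw [NormedSpace.normalize, norm_smul, norm_inv, norm_norm]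
  exact inv_mul_le_one

lemma measurable_normalize [MeasurableSpace E] [BorelSpace E] [SecondCountableTopology E] :
    Measurable (NormedSpace.normalize : E → E) :=
  measurable_norm.inv.smul measurable_id

end Normalize

section InnerProductSpace

variable {E : Type*} [NormedAddCommGroup E] [InnerProductSpace ℝ E]

lemma inner_mul_gaussianPDFReal_inner (y v w : E) :
    ⟪y, w⟫ * gaussianPDFReal 0 (‖y‖₊ ^ 2) ⟪v, y⟫ = (√(2 * Real.pi))⁻¹ *
      (⟪NormedSpace.normalize y, w⟫ * Real.exp (-⟪v, NormedSpace.normalize y⟫ ^ 2 / 2)) := by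
  simp only [gaussianPDFReal, NormedSpace.normalize, real_inner_smul_left, real_inner_smul_right,
    NNReal.coe_pow, coe_nnnorm, sub_zero]
  rw [Real.sqrt_mul (by positivity), Real.sqrt_sq (norm_nonneg y)]
  field_simp

theorem map_neg_eq_self_of_integral_sin_inner_eq_zero [CompleteSpace E]
    [SecondCountableTopology E] [MeasurableSpace E] [BorelSpace E] {μ : Measure E}
    [IsFiniteMeasure μ] (hμ : ∀ t : E, ∫ x, Real.sin ⟪x, t⟫ ∂μ = 0) : μ.map Neg.neg = μ := by
  refine Measure.ext_of_charFun (funext fun t ↦ ?_)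
  have hneg : charFun (μ.map Neg.neg) t = charFun μ (-t) := by
    simpa using charFun_map_smul (μ := μ) (-1) t
  have him : (charFun μ t).im = 0 := by
    rw [charFun_apply, ← Complex.imCLM_apply, ← ContinuousLinearMap.integral_comp_comm]
    · simpa only [Complex.imCLM_apply, Complex.exp_ofReal_mul_I_im] using hμ t
    · refine .of_bound (by fun_prop) 1 (ae_of_all _ fun x ↦ (Complex.norm_exp_ofReal_mul_I _).le)
  rw [hneg, charFun_neg, Complex.conj_eq_iff_im.2 him]

variable [FiniteDimensional ℝ E] [MeasurableSpace E] [BorelSpace E]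

lemma map_inner_stdGaussian (y : E) :
    (stdGaussian E).map (fun g ↦ ⟪g, y⟫) = gaussianReal 0 (‖y‖₊ ^ 2) := by
  have h := IsGaussian.map_eq_gaussianReal (μ := stdGaussian E) (innerSL ℝ y)
  rw [variance_dual_stdGaussian, integral_strongDual_stdGaussian, innerSL_apply_norm] at h
  simp only [real_inner_comm y, ← innerSL_apply_apply ℝ]
  rw [h]
  congr
  ext; simp

lemma integrable_inner_stdGaussian (w : E) : Integrable (fun g ↦ ⟪g, w⟫) (stdGaussian E) :=
  IsGaussian.integrable_id.inner_const w

lemma setIntegral_halfspace_inner_self_stdGaussian (y : E) (a : ℝ) :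
    ∫ g in {g | ⟪g, y⟫ ≤ a}, ⟪g, y⟫ ∂stdGaussian E =
      -(‖y‖ ^ 2 * gaussianPDFReal 0 (‖y‖₊ ^ 2) a) := by
  have h := setIntegral_Iic_sub_gaussianReal 0 (‖y‖₊ ^ 2) a
  rw [← map_inner_stdGaussian, setIntegral_map measurableSet_Iic (by fun_prop) (by fun_prop)] at h
  simp only [sub_zero, NNReal.coe_pow, coe_nnnorm] at h
  exact h

-- Averaging over the reflection in the line `ℝ y` replaces `w` by its projection onto that line.
lemma setIntegral_halfspace_inner_stdGaussian (y w : E) (a : ℝ) :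
    ∫ g in {g | ⟪g, y⟫ ≤ a}, ⟪g, w⟫ ∂stdGaussian E =
      -(⟪y, w⟫ * gaussianPDFReal 0 (‖y‖₊ ^ 2) a) := by
  set H : Set E := {g | ⟪g, y⟫ ≤ a}
  set R := (ℝ ∙ y).reflection with hR
  have hH : MeasurableSet H := measurableSet_le (by fun_prop) measurable_const
  have hsymm (x z : E) : ⟪R x, z⟫ = ⟪x, R z⟫ := by
    rw [← R.inner_map_map, Submodule.reflection_reflection]
  have hRy : R y = y :=
    Submodule.reflection_mem_subspace_eq_self (Submodule.mem_span_singleton_self y)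
  have hRH : R ⁻¹' H = H := by ext g; simp only [H, mem_preimage, mem_ofPred_eq, hsymm, hRy]
  have hreflect : ∫ g in H, ⟪g, w⟫ ∂stdGaussian E = ∫ g in H, ⟪g, R w⟫ ∂stdGaussian E := by
    conv_lhs => rw [← stdGaussian_map R]
    rw [setIntegral_map hH (by fun_prop) (by fun_prop), hRH]
    simp only [hsymm]
  have haverage : w + R w = (2 * (⟪y, w⟫ / ‖y‖ ^ 2)) • y := by
    rw [hR, Submodule.reflection_singleton_apply, ← Nat.cast_smul_eq_nsmul ℝ, smul_smul]
    simp
  have htwo : 2 * ∫ g in H, ⟪g, w⟫ ∂stdGaussian E =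
      2 * -(⟪y, w⟫ * gaussianPDFReal 0 (‖y‖₊ ^ 2) a) := by
    calc 2 * ∫ g in H, ⟪g, w⟫ ∂stdGaussian E
      _ = ∫ g in H, ⟪g, w + R w⟫ ∂stdGaussian E := by
        simp only [inner_add_right]
        rw [integral_add (integrable_inner_stdGaussian w).integrableOn
          (integrable_inner_stdGaussian _).integrableOn, ← hreflect, two_mul]
      _ = 2 * (⟪y, w⟫ / ‖y‖ ^ 2) * -(‖y‖ ^ 2 * gaussianPDFReal 0 (‖y‖₊ ^ 2) a) := by
        simp only [haverage, real_inner_smul_right, integral_const_mul, H,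
          setIntegral_halfspace_inner_self_stdGaussian]
      _ = 2 * -(⟪y, w⟫ * gaussianPDFReal 0 (‖y‖₊ ^ 2) a) := by
        rcases eq_or_ne y 0 with rfl | hy
        · simp
        · field_simp [norm_ne_zero_iff.2 hy]
  exact mul_left_cancel₀ two_ne_zero htwo

lemma integral_inner_mul_gaussianPDFReal_inner (μ : Measure E) [IsFiniteMeasure μ] (v w : E) :
    ∫ y, ⟪y, w⟫ * gaussianPDFReal 0 (‖y‖₊ ^ 2) ⟪v, y⟫ ∂μ =
      -∫ g, μ.real {y | ⟪g - v, y⟫ ≤ 0} * ⟪g, w⟫ ∂stdGaussian E := by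
  let H (y : E) : Set E := {g | ⟪g - v, y⟫ ≤ 0}
  have hH (y : E) : H y = {g | ⟪g, y⟫ ≤ ⟪v, y⟫} := by
    simp only [H, inner_sub_left, sub_nonpos]
  have hmeas : MeasurableSet {p : E × E | ⟪p.2 - v, p.1⟫ ≤ 0} :=
    measurableSet_le (by fun_prop) measurable_const
  have hint : Integrable (Function.uncurry fun y g ↦ (H y).indicator (fun g ↦ ⟪g, w⟫) g)
      (μ.prod (stdGaussian E)) :=
    ((integrable_inner_stdGaussian w).comp_snd μ).indicator hmeas
  calc ∫ y, ⟪y, w⟫ * gaussianPDFReal 0 (‖y‖₊ ^ 2) ⟪v, y⟫ ∂μ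
    _ = -∫ y, ∫ g, (H y).indicator (fun g ↦ ⟪g, w⟫) g ∂stdGaussian E ∂μ := by
      rw [← integral_neg]
      refine integral_congr_ae (ae_of_all _ fun y ↦ ?_)
      dsimp only
      rw [hH, integral_indicator (measurableSet_le (by fun_prop) measurable_const),
        setIntegral_halfspace_inner_stdGaussian, neg_neg]
    _ = -∫ g, ∫ y, {y | ⟪g - v, y⟫ ≤ 0}.indicator (fun _ ↦ ⟪g, w⟫) y ∂μ ∂stdGaussian E := by
      rw [integral_integral_swap hint]
      rfl
    _ = -∫ g, μ.real {y | ⟪g - v, y⟫ ≤ 0} * ⟪g, w⟫ ∂stdGaussian E := by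
      congr! with g
      exact integral_indicator_const _ (measurableSet_le (by fun_prop) measurable_const)

lemma integral_inner_mul_gaussianPDFReal_inner_eq_zero {μ : Measure E} [IsFiniteMeasure μ]
    (hμ : ∀ u : E, μ {y | ⟪u, y⟫ ≤ 0} = μ {y | 0 ≤ ⟪u, y⟫}) (v w : E) :
    ∫ y, ⟪y, w⟫ * gaussianPDFReal 0 (‖y‖₊ ^ 2) ⟪v, y⟫ ∂μ = 0 := by
  have hmap (u : E) : (μ.map Neg.neg).real {y | ⟪u, y⟫ ≤ 0} = μ.real {y | ⟪u, y⟫ ≤ 0} := by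
    rw [map_measureReal_apply measurable_neg (measurableSet_le (by fun_prop) measurable_const),
      measureReal_def, measureReal_def, hμ u]
    simp only [preimage_ofPred_eq, inner_neg_right, Left.neg_nonpos_iff]
  have hodd := integral_inner_mul_gaussianPDFReal_inner (μ.map Neg.neg) v w
  simp only [hmap, ← integral_inner_mul_gaussianPDFReal_inner μ v w] at hodd
  rw [integral_map (by fun_prop) (Measurable.aestronglyMeasurable ?_)] at hodd
  · simp only [inner_neg_left, inner_neg_right, nnnorm_neg, gaussianPDFReal_zero_neg, neg_mul,
      integral_neg] at hodd
    exact CharZero.eq_neg_self_iff.1 hodd.symm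
  · unfold gaussianPDFReal
    fun_prop

lemma integral_inner_normalize_mul_exp_eq_zero {μ : Measure E} [IsFiniteMeasure μ]
    (hμ : ∀ u : E, μ {y | ⟪u, y⟫ ≤ 0} = μ {y | 0 ≤ ⟪u, y⟫}) (v w : E) :
    ∫ y, ⟪NormedSpace.normalize y, w⟫ * Real.exp (-⟪v, NormedSpace.normalize y⟫ ^ 2 / 2) ∂μ =
      0 := by
  have h := integral_inner_mul_gaussianPDFReal_inner_eq_zero hμ v w
  simp only [inner_mul_gaussianPDFReal_inner, integral_const_mul] at h
  exact (mul_eq_zero.1 h).resolve_left (by positivity)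

lemma integral_sin_inner_normalize_eq_zero {μ : Measure E} [IsFiniteMeasure μ]
    (hμ : ∀ u : E, μ {y | ⟪u, y⟫ ≤ 0} = μ {y | 0 ≤ ⟪u, y⟫}) (w : E) :
    ∫ y, Real.sin ⟪NormedSpace.normalize y, w⟫ ∂μ = 0 := by
  have hmeas : Measurable fun y : E ↦ ⟪NormedSpace.normalize y, w⟫ :=
    measurable_normalize.inner_const
  refine integral_sin_eq_zero_of_forall_integral_mul_exp (C := ‖w‖) hmeas.aestronglyMeasurable
    (ae_of_all _ fun y ↦ ?_) fun n ↦ ?_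
  · calc |⟪NormedSpace.normalize y, w⟫|
      _ ≤ ‖NormedSpace.normalize y‖ * ‖w‖ := abs_real_inner_le_norm _ _
      _ ≤ 1 * ‖w‖ := by gcongr; exact norm_normalize_le_one y
      _ = ‖w‖ := one_mul _
  · convert integral_inner_normalize_mul_exp_eq_zero hμ (√(2 * n) • w) w using 4 with y
    rw [real_inner_smul_left, mul_pow, Real.sq_sqrt (by positivity), ← Real.exp_nat_mul,
      real_inner_comm]
    ring_nf

theorem map_normalize_eq_map_neg_normalize {μ : Measure E} [IsFiniteMeasure μ]
    (hμ : ∀ u : E, μ {y | ⟪u, y⟫ ≤ 0} = μ {y | 0 ≤ ⟪u, y⟫}) :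
    μ.map NormedSpace.normalize = μ.map (fun y ↦ -NormedSpace.normalize y) := by
  have hsin (t : E) : ∫ x, Real.sin ⟪x, t⟫ ∂μ.map NormedSpace.normalize = 0 := by
    rw [integral_map measurable_normalize.aemeasurable (by fun_prop)]
    exact integral_sin_inner_normalize_eq_zero hμ t
  rw [← map_neg_eq_self_of_integral_sin_inner_eq_zero hsin,
    Measure.map_map measurable_neg measurable_normalize]
  rfl

end InnerProductSpace

section Euclidean

variable {d : ℕ}

lemma toLp_dir (v : Fin d → ℝ) :
    WithLp.toLp 2 (dir v) = NormedSpace.normalize (WithLp.toLp 2 v) := by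
  simp [dir, NormedSpace.normalize, EuclideanSpace.norm_eq]

lemma measure_halfspace_eq_half {μ : Measure (Fin d → ℝ)} [IsFiniteMeasure μ] {β : Fin d → ℝ}
    (hmed : ∀ u : Fin d → ℝ, ∑ i, (u i) ^ 2 = 1 →
      (μ {y | ∑ i, u i * y i ≤ ∑ i, u i * β i}).toReal = 1 / 2) {u : Fin d → ℝ} (hu : u ≠ 0) :
    μ {y | ∑ i, u i * y i ≤ ∑ i, u i * β i} = 1 / 2 := by
  set r := √(∑ i, u i ^ 2)
  have hsum : 0 < ∑ i, u i ^ 2 := by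
    refine (Finset.sum_nonneg fun i _ ↦ sq_nonneg (u i)).lt_of_ne' fun h ↦ hu (funext fun i ↦ ?_)
    simpa using (Finset.sum_eq_zero_iff_of_nonneg fun i _ ↦ sq_nonneg (u i)).1 h i
  have hr : 0 < r := Real.sqrt_pos.2 hsum
  have hunit : ∑ i, ((r⁻¹ • u) i) ^ 2 = 1 := by
    simp only [Pi.smul_apply, smul_eq_mul, mul_pow, ← Finset.mul_sum]
    rw [inv_pow, Real.sq_sqrt hsum.le, inv_mul_cancel₀ hsum.ne']
  have h := hmed _ hunit
  simp only [Pi.smul_apply, smul_eq_mul, mul_assoc, ← Finset.mul_sum,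
    mul_le_mul_iff_right₀ (inv_pos.2 hr)] at h
  rw [← ENNReal.toReal_eq_toReal_iff' (measure_ne_top _ _) (by simp), h]
  simp

theorem map_dir_sub_eq_map_neg_dir_sub {μ : Measure (Fin d → ℝ)} [IsFiniteMeasure μ]
    {β : Fin d → ℝ}
    (hμ : ∀ u : Fin d → ℝ, μ {y | ∑ i, u i * y i ≤ ∑ i, u i * β i} =
      μ {y | ∑ i, u i * β i ≤ ∑ i, u i * y i}) :
    μ.map (fun y ↦ dir (y - β)) = μ.map (fun y ↦ -dir (y - β)) := by
  let φ (y : Fin d → ℝ) : EuclideanSpace ℝ (Fin d) := WithLp.toLp 2 (y - β)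
  have hφ : Measurable φ := by fun_prop
  have hsymm (u : EuclideanSpace ℝ (Fin d)) :
      μ.map φ {z | ⟪u, z⟫ ≤ 0} = μ.map φ {z | 0 ≤ ⟪u, z⟫} := by
    rw [Measure.map_apply hφ (measurableSet_le (by fun_prop) measurable_const),
      Measure.map_apply hφ (measurableSet_le measurable_const (by fun_prop))]
    have hinner (y : Fin d → ℝ) : ⟪u, φ y⟫ = ∑ i, u i * y i - ∑ i, u i * β i := by
      simp only [φ, PiLp.inner_apply, RCLike.inner_apply, conj_trivial, Pi.sub_apply, sub_mul,
        Finset.sum_sub_distrib, mul_comm]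
    simpa only [preimage_ofPred_eq, hinner, sub_nonpos, sub_nonneg] using hμ u
  have hmap {g : EuclideanSpace ℝ (Fin d) → EuclideanSpace ℝ (Fin d)} (hg : Measurable g) :
      μ.map (fun y ↦ (g (φ y)).ofLp) = ((μ.map φ).map g).map WithLp.ofLp := by
    rw [Measure.map_map hg hφ, Measure.map_map (by fun_prop) (hg.comp hφ)]
    rfl
  calc μ.map (fun y ↦ dir (y - β))
    _ = μ.map (fun y ↦ (NormedSpace.normalize (φ y)).ofLp) := by simp only [φ, ← toLp_dir]
    _ = μ.map (fun y ↦ (-NormedSpace.normalize (φ y)).ofLp) := by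
      rw [hmap measurable_normalize, map_normalize_eq_map_neg_normalize hsymm]
      exact (hmap measurable_normalize.neg).symm
    _ = μ.map (fun y ↦ -dir (y - β)) := by simp only [φ, ← toLp_dir, WithLp.ofLp_neg]

theorem csc_angular_symmetry_general [NeZero d] (μ : Measure (Fin d → ℝ)) [IsFiniteMeasure μ]
    (β : Fin d → ℝ) (hmed : ∀ u : Fin d → ℝ, ∑ i, (u i) ^ 2 = 1 →
      (μ {y | ∑ i, u i * y i ≤ ∑ i, u i * β i}).toReal = 1 / 2) :
    μ.map (fun y ↦ dir (y - β)) = μ.map (fun y ↦ -dir (y - β)) ∧ HD μ β = 1 / 2 := by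
  have : Nonempty {u : Fin d → ℝ // ∑ i, (u i) ^ 2 = 1} :=
    ⟨⟨Pi.single 0 1, by simp [Pi.single_apply]⟩⟩
  refine ⟨map_dir_sub_eq_map_neg_dir_sub fun u ↦ ?_, ?_⟩
  · rcases eq_or_ne u 0 with rfl | hu
    · simp
    · have hneg := measure_halfspace_eq_half hmed (neg_ne_zero.2 hu)
      simp only [Pi.neg_apply, neg_mul, Finset.sum_neg_distrib, neg_le_neg_iff] at hneg
      rw [hneg, measure_halfspace_eq_half hmed hu]
  · simp only [HD, fun u : {u : Fin d → ℝ // ∑ i, (u i) ^ 2 = 1} ↦ hmed u.1 u.2, ciInf_const]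

end Euclidean

/-- If `X ∼ CSC_d(γ)` (law `μ`, with atomless one-dimensional projections) is such
that every projection `uᵀX` with unit `u` has median `u₁ η`, where `η = γ/√(1+γ²)`,
then `X` is angularly symmetric about `β = (η,0,…,0)` and `HD_X(β) = 1/2`. -/
theorem csc_angular_symmetry {n : ℕ} (γ : ℝ) (μ : Measure (Fin (n + 1) → ℝ))
    [IsProbabilityMeasure μ]
    (hcont : ∀ u : Fin (n + 1) → ℝ, u ≠ 0 → ∀ t : ℝ, μ {y | ∑ i, u i * y i = t} = 0)
    (hmed : ∀ u : Fin (n + 1) → ℝ, ∑ i, (u i) ^ 2 = 1 →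
      (μ {y | ∑ i, u i * y i ≤ u 0 * (γ / Real.sqrt (1 + γ ^ 2))}).toReal = 1 / 2) :
    μ.map (fun y => dir (y - Pi.single 0 (γ / Real.sqrt (1 + γ ^ 2)))) =
      μ.map (fun y => -dir (y - Pi.single 0 (γ / Real.sqrt (1 + γ ^ 2)))) ∧
    HD μ (Pi.single 0 (γ / Real.sqrt (1 + γ ^ 2))) = 1 / 2 :=
  csc_angular_symmetry_general μ _ (by simpa [Pi.single_apply] using hmed)
end
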